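/- arXiv:cs/0207072 — 5 statements merged into one kernel-verified Lean document; each statement's English description precedes it below -/
import Mathlib

section
/- Let T = B1,…,Bn be any nested abnormality theory (NAT), and let T' be the single-block NAT {Z : B1,…,Bn}, where Z is any subset of the atoms At∖Ab. Then T and T' have exactly the same models. -/
/-!
STATEMENT 3: grouping the blocks of a NAT into a single block preserves the models.
-/

namespace NestedCirc

universe u
variable {α : Type u}

/-- Propositional formulas over atoms `α`. -/
inductive PForm (α : Type u) : Type u where
  | tru : PForm α
  | fls : PForm α
  | atom : α → PForm α
  | neg : PForm α → PForm α
  | conj : PForm α → PForm α → PForm α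
  | disj : PForm α → PForm α → PForm α

namespace PForm

/-- Satisfaction of a propositional formula in an interpretation (set of true atoms). -/
def sat : PForm α → Set α → Prop
  | tru, _ => True
  | fls, _ => False
  | atom a, M => a ∈ M
  | neg φ, M => ¬ φ.sat M
  | conj φ ψ, M => φ.sat M ∧ ψ.sat M
  | disj φ ψ, M => φ.sat M ∨ ψ.sat M

/-- Implication `φ → ψ`. -/
def imp (φ ψ : PForm α) : PForm α := disj (neg φ) ψ

/-- Equivalence `φ ↔ ψ`. -/
def iffF (φ ψ : PForm α) : PForm α := conj (imp φ ψ) (imp ψ φ)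

/-- The atoms occurring in a formula. -/
def atoms : PForm α → Set α
  | tru => ∅
  | fls => ∅
  | atom a => {a}
  | neg φ => φ.atoms
  | conj φ ψ => φ.atoms ∪ ψ.atoms
  | disj φ ψ => φ.atoms ∪ ψ.atoms

/-- Conjunction of a list of formulas. -/
def conjList (l : List (PForm α)) : PForm α := l.foldr conj tru

end PForm

/-- `M ≤_{P;Z} M'` : `M` agrees with `M'` on the fixed atoms `(P ∪ Z)ᶜ`
and is smaller or equal on the minimized atoms `P`. -/
def lePZ (P Z M M' : Set α) : Prop :=
  M ∩ P ⊆ M' ∩ P ∧ M ∩ (P ∪ Z)ᶜ = M' ∩ (P ∪ Z)ᶜ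

/-- `M <_{P;Z} M'` (strict preference). -/
def ltPZ (P Z M M' : Set α) : Prop := lePZ P Z M M' ∧ ¬ lePZ P Z M' M

/-- A block `{C : B₁,…,Bₘ}` of a nested abnormality theory: the described atoms `C`,
the members that are propositional formulas, and the members that are blocks. -/
inductive Block (α : Type u) : Type u where
  | mk : Set α → List (PForm α) → List (Block α) → Block α

/-- Satisfaction of a block: `M ⊨ {C : B₁,…,Bₘ}` iff some interpretation `M*` agreeing
with `M` outside `Ab` satisfies every member and is `(Ab;C)`-minimal doing so. -/
def Block.sat (Ab : Set α) : Block α → Set α → Prop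
  | .mk C fs bs, M =>
      ∃ Ms : Set α, Ms ∩ Abᶜ = M ∩ Abᶜ ∧
        ((∀ f ∈ fs, f.sat Ms) ∧ ∀ b ∈ bs, Block.sat Ab b Ms) ∧
        ∀ N : Set α, ((∀ f ∈ fs, f.sat N) ∧ ∀ b ∈ bs, Block.sat Ab b N) → ¬ ltPZ Ab C N Ms

/-- A nested abnormality theory (NAT): a finite collection of blocks. -/
abbrev NAT (α : Type u) := List (Block α)

/-- `M ⊨ T` iff `M` satisfies every block of `T`. -/
def NAT.sat (Ab : Set α) (T : NAT α) (M : Set α) : Prop := ∀ B ∈ T, Block.sat Ab B M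

/-- Block satisfaction depends only on the atoms outside `Ab`. -/
theorem block_sat_congr (Ab : Set α) (B : Block α) {M N : Set α}
    (h : M ∩ Abᶜ = N ∩ Abᶜ) (hM : Block.sat Ab B M) : Block.sat Ab B N := by
  cases B with
  | mk C fs bs =>
    rw [Block.sat] at hM ⊢
    obtain ⟨Ms, h1, h2⟩ := hM
    exact ⟨Ms, h1.trans h, h2⟩

/-- Let `T = B₁,…,Bₙ` be any NAT and let `T' = {Z : B₁,…,Bₙ}` be the
single-block NAT whose members are the blocks of `T`, where `Z` is any subset of the
atoms `At ∖ Ab`.  Then `T` and `T'` have exactly the same models. -/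
theorem group_blocks (Ab : Set α) (T : NAT α) (Z : Set α) (hZ : Z ⊆ Abᶜ) :
    ∀ M : Set α, NAT.sat Ab T M ↔ Block.sat Ab (.mk Z [] T) M := by
  intro M
  rw [Block.sat]
  constructor
  · intro h
    have e : (M ∩ Abᶜ) ∩ Abᶜ = M ∩ Abᶜ := by
      rw [Set.inter_assoc, Set.inter_self]
    refine ⟨M ∩ Abᶜ, e, ⟨by simp, fun b hb => block_sat_congr Ab b e.symm (h b hb)⟩, ?_⟩
    rintro N - ⟨⟨_, h2⟩, h3⟩
    refine h3 ⟨?_, h2.symm⟩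
    rintro x ⟨⟨_, hx⟩, hx'⟩
    exact absurd hx' hx
  · rintro ⟨Ms, h1, ⟨_, h2⟩, _⟩ B hB
    exact block_sat_congr Ab B h1 (h2 B hB)

end NestedCirc
end

section
/- Let Φ = ∀X ∃Y ψ be a quantified Boolean formula with ψ propositional over the disjoint atom sets X and Y, let u be a fresh atom, ab ∈ Ab an abnormality atom, φ = ψ ∨ u, and let T1 be the NAT consisting of the single block {Y, u : φ, u ↔ ab}. Then: (a) T1 ⊨ ¬u if and only if Φ is true; and (b) every model M of T1 satisfies: M ⊨ u if and only if ψ[M[X]] is unsatisfiable, i.e., no truth assignment to Y makes ψ true when X is fixed to its values in M. -/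
/-!
STATEMENT 6: the NAT `T₁ = {Y, u : ψ ∨ u, u ↔ ab}` expresses the QBF `Φ = ∀X ∃Y ψ`:
`T₁ ⊨ ¬u` iff `Φ` is true, and a model `M` of `T₁` satisfies `u` iff `ψ[M[X]]` is unsatisfiable.
-/

namespace NestedCirc

universe u
variable {α : Type u}

theorem PForm.sat_congr (ψ : PForm α) (M N : Set α) (h : ∀ a ∈ ψ.atoms, (a ∈ M ↔ a ∈ N)) :
    ψ.sat M ↔ ψ.sat N := by
  induction ψ with
  | tru => exact Iff.rfl
  | fls => exact Iff.rfl
  | atom a => exact h a rfl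
  | neg φ ih => exact not_congr (ih h)
  | conj φ χ ih1 ih2 =>
    exact and_congr (ih1 fun a ha => h a (Or.inl ha)) (ih2 fun a ha => h a (Or.inr ha))
  | disj φ χ ih1 ih2 =>
    exact or_congr (ih1 fun a ha => h a (Or.inl ha)) (ih2 fun a ha => h a (Or.inr ha))

theorem T1_sat_iff (Ab Y : Set α) (u ab : α) (ψ : PForm α) (M : Set α) :
    NAT.sat Ab [Block.mk (Y ∪ {u})
          [ψ.disj (.atom u), PForm.iffF (.atom u) (.atom ab)] []] M ↔
    ∃ Ms : Set α, Ms ∩ Abᶜ = M ∩ Abᶜ ∧ ((ψ.sat Ms ∨ u ∈ Ms) ∧ (u ∈ Ms ↔ ab ∈ Ms)) ∧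
      ∀ N : Set α, ((ψ.sat N ∨ u ∈ N) ∧ (u ∈ N ↔ ab ∈ N)) → ¬ ltPZ Ab (Y ∪ {u}) N Ms := by
  have key : ∀ N : Set α, (u ∉ N ∨ ab ∈ N) ∧ (ab ∉ N ∨ u ∈ N) ↔ (u ∈ N ↔ ab ∈ N) := by
    intro N; tauto
  simp [NAT.sat, Block.sat, PForm.iffF, PForm.imp, PForm.sat, key]

/-- Let `Φ = ∀X ∃Y ψ` with `ψ` propositional over the disjoint atom
sets `X` and `Y`, let `u` be a fresh atom, `ab ∈ Ab` an abnormality atom, `φ = ψ ∨ u`,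
and let `T₁` be the NAT consisting of the single block `{Y, u : φ, u ↔ ab}`.  Then:
(a) `T₁ ⊨ ¬u` iff `Φ` is true; and
(b) every model `M` of `T₁` satisfies: `u ∈ M` iff `ψ[M[X]]` is unsatisfiable, i.e.,
no truth assignment to `Y` makes `ψ` true when `X` is fixed to its values in `M`. -/
theorem nat_T1_expresses_qbf (Ab X Y : Set α) (u ab : α) (ψ : PForm α)
    (hXY : Disjoint X Y) (hu : u ∉ X ∪ Y) (hab : ab ∈ Ab)
    (hAb : Disjoint (X ∪ Y ∪ {u}) Ab) (hAt : X ∪ Y ∪ {u} ∪ Ab = Set.univ)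
    (hatoms : ψ.atoms ⊆ X ∪ Y) :
    ((∀ M : Set α,
        NAT.sat Ab [Block.mk (Y ∪ {u})
          [ψ.disj (.atom u), PForm.iffF (.atom u) (.atom ab)] []] M → u ∉ M) ↔
      (∀ IX : Set α, ∃ IY : Set α, ψ.sat ((IX ∩ X) ∪ (IY ∩ Y)))) ∧
    (∀ M : Set α,
        NAT.sat Ab [Block.mk (Y ∪ {u})
          [ψ.disj (.atom u), PForm.iffF (.atom u) (.atom ab)] []] M →
        (u ∈ M ↔ ¬ ∃ IY : Set α, ψ.sat ((M ∩ X) ∪ (IY ∩ Y)))) := by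
  have hbij : ∀ M : Set α,
        NAT.sat Ab [Block.mk (Y ∪ {u})
          [ψ.disj (.atom u), PForm.iffF (.atom u) (.atom ab)] []] M →
        (u ∈ M ↔ ¬ ∃ IY : Set α, ψ.sat ((M ∩ X) ∪ (IY ∩ Y))) := by
    intro M hM
    obtain ⟨Ms, hag, ⟨h1, h2⟩, hmin⟩ := (T1_sat_iff ..).1 hM
    have hag' : ∀ a, a ∉ Ab → (a ∈ Ms ↔ a ∈ M) := by
      intro a ha
      have := Set.ext_iff.1 hag a
      simpa [ha] using this
    have hd : ∀ a, a ∈ X ∪ Y ∪ {u} → a ∉ Ab := fun a ha hb => Set.disjoint_left.1 hAb ha hb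
    have huM := hag' u (hd u (Or.inr rfl))
    constructor
    · rintro hM ⟨IY, hIY⟩
      have hU : u ∉ (M ∩ X) ∪ (IY ∩ Y) := fun h => hu (h.imp And.right And.right)
      have hA : ∀ a ∈ Ab, a ∉ (M ∩ X) ∪ (IY ∩ Y) :=
        fun a ha h => hd a (Or.inl (h.imp And.right And.right)) ha
      refine hmin _ ⟨Or.inl hIY, iff_of_false hU (hA ab hab)⟩ ⟨⟨?_, ?_⟩, ?_⟩
      · rintro a ⟨ha, hb⟩
        exact absurd ha (hA a hb)
      · ext a
        have := hag' a
        simp only [Set.mem_inter_iff, Set.mem_union, Set.mem_compl_iff]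
        have hx : a ∈ X ∪ Y ∪ {u} ∪ Ab := hAt ▸ Set.mem_univ a
        simp only [Set.mem_union] at hx
        tauto
      · intro h
        exact hA ab hab (h.1 ⟨h2.1 (huM.2 hM), hab⟩).1
    · intro h
      by_contra hn
      have hs : ψ.sat Ms := h1.resolve_right (fun h => hn (huM.1 h))
      refine h ⟨Ms, (PForm.sat_congr _ _ _ ?_).1 hs⟩
      intro a ha
      have h3 := hatoms ha
      have h4 := hag' a (hd a (Or.inl h3))
      simp only [Set.mem_inter_iff, Set.mem_union] at h3 ⊢
      have : a ∈ X → a ∉ Y := fun hx => Set.disjoint_left.1 hXY hx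
      tauto
  refine ⟨⟨?_, ?_⟩, hbij⟩
  · intro h IX
    by_contra hn
    have huAb : u ∉ Ab := fun hb => Set.disjoint_left.1 hAb (Or.inr rfl) hb
    refine h (IX ∩ X ∪ {u, ab}) ((T1_sat_iff ..).2 ⟨_, rfl, ?_, ?_⟩) (by simp)
    · simp
    · rintro N ⟨h1, h2⟩ ⟨⟨hle, heq⟩, hnot⟩
      have hX : ∀ a ∈ X, (a ∈ N ↔ a ∈ IX) := by
        intro a ha
        have h3 := Set.ext_iff.1 heq a
        have h4 : a ∉ Ab := fun hb => Set.disjoint_left.1 hAb (Or.inl (Or.inl ha)) hb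
        have h5 : a ∉ Y := Set.disjoint_left.1 hXY ha
        have h6 : a ≠ u := fun e => hu (Or.inl (e ▸ ha))
        have h7 : a ≠ ab := fun e => h4 (e ▸ hab)
        simpa [ha, h4, h5, h6, h7] using h3
      by_cases huN : u ∈ N
      · refine hnot ⟨?_, heq.symm⟩
        rintro a ⟨ha | ha, hb⟩
        · exact absurd hb (fun hb => Set.disjoint_left.1 hAb (Or.inl (Or.inl ha.2)) hb)
        · rcases ha with rfl | rfl
          · exact absurd hb huAb
          · exact ⟨h2.1 huN, hb⟩
      · refine hn ⟨N, (PForm.sat_congr _ _ _ ?_).1 (h1.resolve_right huN)⟩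
        intro a ha
        have h3 := hatoms ha
        have h4 := hX a
        have : a ∈ X → a ∉ Y := fun hx => Set.disjoint_left.1 hXY hx
        simp only [Set.mem_inter_iff, Set.mem_union] at h3 ⊢
        tauto
  · intro h M hM hu'
    exact (hbij M hM).1 hu' (h M)

end NestedCirc
end

section
/- Let φ be a propositional formula over At, let P and Z be disjoint sets of atoms, let Q = At∖(P∪Z) be the fixed letters, and let M be an interpretation. Define φ_{M,Q} = ⋀_{q∈Q∩M} q ∧ ⋀_{q∈Q∖M} ¬q. Then M is a model of CIRC(φ;P;Z) if and only if M is a model of CIRC(φ ∧ φ_{M,Q}; P; Z∪Q); in particular, if φ is Horn then so is φ ∧ φ_{M,Q}, so model checking for circumscription with fixed letters reduces to model checking for circumscription without fixed letters while preserving the Horn property. -/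
/-!
STATEMENT 11: model checking for circumscription with fixed letters reduces to model
checking for circumscription without fixed letters, preserving the Horn property.
-/

namespace NestedCirc

universe u
variable {α : Type u}

/-- `φ` is a clause: a disjunction of literals (with `fls` for the empty clause). -/
def PForm.IsClause : PForm α → Prop
  | .fls => True
  | .atom _ => True
  | .neg (.atom _) => True
  | .disj φ ψ => φ.IsClause ∧ ψ.IsClause
  | _ => False

/-- The number of positive literals of a clause. -/
def PForm.posCount : PForm α → ℕ
  | .atom _ => 1
  | .disj φ ψ => φ.posCount + ψ.posCount
  | _ => 0

/-- A Horn clause: a clause with at most one positive literal. -/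
def PForm.IsHornClause (φ : PForm α) : Prop := φ.IsClause ∧ φ.posCount ≤ 1

/-- A Horn CNF: a conjunction of Horn clauses. -/
def PForm.IsHornCNF : PForm α → Prop
  | .tru => True
  | .conj φ ψ => φ.IsHornCNF ∧ ψ.IsHornCNF
  | φ => φ.IsHornClause

theorem sat_conjList (l : List (PForm α)) (N : Set α) :
    (PForm.conjList l).sat N ↔ ∀ ψ ∈ l, ψ.sat N := by
  induction l with
  | nil => simp [PForm.conjList, PForm.sat]
  | cons a l ih =>
    have h : (PForm.conjList (a :: l)).sat N ↔ a.sat N ∧ (PForm.conjList l).sat N := Iff.rfl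
    rw [h, ih]; simp

theorem horn_conjList (l : List (PForm α)) (h : ∀ ψ ∈ l, ψ.IsHornCNF) :
    (PForm.conjList l).IsHornCNF := by
  induction l with
  | nil => simp [PForm.conjList, PForm.IsHornCNF]
  | cons a l ih =>
    have h' : (PForm.conjList (a :: l)).IsHornCNF ↔
        a.IsHornCNF ∧ (PForm.conjList l).IsHornCNF := by
      simp [PForm.conjList, PForm.IsHornCNF]
    rw [h']
    exact ⟨h a (by simp), ih fun ψ hψ => h ψ (by simp [hψ])⟩

variable [Fintype α]

/-- A list enumerating a set of atoms (the alphabet is finite). -/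
noncomputable def listOf (S : Set α) : List α := (Set.toFinite S).toFinset.toList

/-- `φ_{M,Q} = ⋀_{q∈Q∩M} q ∧ ⋀_{q∈Q∖M} ¬q`, the conjunction of literals pinning the
letters of `Q` to their values in `M`. -/
noncomputable def pin (M Q : Set α) : PForm α :=
  PForm.conj (PForm.conjList ((listOf (Q ∩ M)).map PForm.atom))
             (PForm.conjList ((listOf (Q \ M)).map fun q => PForm.neg (PForm.atom q)))

theorem sat_pin (M Q N : Set α) : (pin M Q).sat N ↔ N ∩ Q = M ∩ Q := by
  have h : (pin M Q).sat N ↔ (∀ q, q ∈ Q → q ∈ M → q ∈ N) ∧ (∀ q, q ∈ Q → q ∉ M → q ∉ N) := by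
    simp only [pin, PForm.sat, sat_conjList, listOf, List.forall_mem_map]
    simp
  rw [h, Set.ext_iff]
  simp only [Set.mem_inter_iff]
  constructor
  · rintro ⟨h1, h2⟩ x
    have := h1 x
    have := h2 x
    tauto
  · intro h
    constructor <;> intro q <;> have := h q <;> tauto

theorem horn_pin (M Q : Set α) : (pin M Q).IsHornCNF := by
  refine ⟨horn_conjList _ ?_, horn_conjList _ ?_⟩ <;> intro ψ hψ <;>
    obtain ⟨q, -, rfl⟩ := List.mem_map.1 hψ <;>
    simp [PForm.IsHornCNF, PForm.IsHornClause, PForm.IsClause, PForm.posCount]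

/-- Let `φ` be propositional, `P`, `Z` disjoint, `Q = At∖(P∪Z)` the
fixed letters, and `M` an interpretation.  Then `M ⊨ CIRC(φ;P;Z)` iff
`M ⊨ CIRC(φ ∧ φ_{M,Q}; P; Z∪Q)`; in particular, if `φ` is Horn then so is
`φ ∧ φ_{M,Q}`, so model checking for circumscription with fixed letters reduces to
model checking for circumscription without fixed letters, preserving the Horn
property. -/
theorem circ_fixed_letters_model_checking (φ : PForm α) (P Z : Set α)
    (hPZ : Disjoint P Z) (M : Set α) :
    ((φ.sat M ∧ ∀ N : Set α, φ.sat N → ¬ ltPZ P Z N M) ↔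
      ((φ.conj (pin M (P ∪ Z)ᶜ)).sat M ∧
        ∀ N : Set α, (φ.conj (pin M (P ∪ Z)ᶜ)).sat N → ¬ ltPZ P (Z ∪ (P ∪ Z)ᶜ) N M)) ∧
    (φ.IsHornCNF → (φ.conj (pin M (P ∪ Z)ᶜ)).IsHornCNF) := by
  refine ⟨?_, fun h => ⟨h, horn_pin _ _⟩⟩
  have hs : ∀ N, (φ.conj (pin M (P ∪ Z)ᶜ)).sat N ↔
      φ.sat N ∧ N ∩ (P ∪ Z)ᶜ = M ∩ (P ∪ Z)ᶜ := fun N => by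
    rw [← sat_pin]; rfl
  have he : (P ∪ (Z ∪ (P ∪ Z)ᶜ))ᶜ = (∅ : Set α) := by
    rw [← Set.union_assoc, Set.union_compl_self, Set.compl_univ]
  simp only [hs, ltPZ, lePZ, he, Set.inter_empty, and_true]
  constructor
  · rintro ⟨h1, h2⟩
    refine ⟨h1, fun N hN hlt => h2 N hN.1 ⟨⟨hlt.1, hN.2⟩, fun h => hlt.2 h.1⟩⟩
  · rintro ⟨h1, h2⟩
    exact ⟨h1, fun N hN hlt => h2 N ⟨hN, hlt.1.2⟩
      ⟨hlt.1.1, fun h => hlt.2 ⟨h, hlt.1.2.symm⟩⟩⟩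

end NestedCirc
end

section
/- Elimination of fixed letters from a NAT: let T be a NAT, and let T' be obtained from T by, for each fixed letter q, introducing two fresh abnormality letters ab_q and ab'_q into Ab, adding the formula (q ↔ ab_q) ∧ (ab_q ↔ ¬ab'_q) as a new member in each block occurring in T in which q is fixed, and declaring q described in every block occurring in T. Then, modulo the set Ab' of auxiliary abnormality letters, T and T' are logically equivalent, i.e., they have the same sets of models on the original alphabet. -/
/-!
STATEMENT 14: elimination of fixed letters from a NAT via auxiliary abnormality letters.
-/

namespace NestedCirc

universe u
variable {α : Type u}

/-- Renaming the atoms of a propositional formula. -/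
def PForm.map {β : Type u} (g : α → β) : PForm α → PForm β
  | .tru => .tru
  | .fls => .fls
  | .atom a => .atom (g a)
  | .neg φ => .neg (φ.map g)
  | .conj φ ψ => .conj (φ.map g) (ψ.map g)
  | .disj φ ψ => .disj (φ.map g) (ψ.map g)

variable [Fintype α]

/-- The extended alphabet: `Sum.inl q` is the original letter `q`, and for every
letter `q` that may be fixed somewhere, `Sum.inr (false, q)` is the fresh abnormality
letter `ab_q` and `Sum.inr (true, q)` is the fresh abnormality letter `ab'_q`. -/
abbrev ExtA (α : Type u) := α ⊕ Bool × α

/-- The extended set of abnormality letters: `Ab` together with all letters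
`ab_q`, `ab'_q`. -/
def extAb (Ab : Set α) : Set (ExtA α) := Sum.inl '' Ab ∪ Sum.inr '' (Set.univ ×ˢ Abᶜ)

/-- The transformation eliminating fixed letters from a block: every letter of
`At ∖ Ab` is declared described, and for each letter `q` that was fixed in the block
(i.e., `q ∈ (C ∪ Ab)ᶜ`), the formula `(q ↔ ab_q) ∧ (ab_q ↔ ¬ab'_q)` is added as a new
member. -/
noncomputable def Block.elimFixed (Ab : Set α) : Block α → Block (ExtA α)
  | .mk C fs bs =>
      .mk (Sum.inl '' Abᶜ)
        (((listOf ((C ∪ Ab)ᶜ)).map fun q =>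
            PForm.conj
              (PForm.iffF (.atom (Sum.inl q)) (.atom (Sum.inr (false, q))))
              (PForm.iffF (.atom (Sum.inr (false, q))) (.neg (.atom (Sum.inr (true, q)))))) ++
          fs.map (PForm.map Sum.inl))
        (bs.attach.map fun b => Block.elimFixed Ab b.1)
  termination_by B => sizeOf B
  decreasing_by
    have := List.sizeOf_lt_of_mem b.2
    simp only [Block.mk.sizeOf_spec]
    omega

/-- Well-formed blocks: the described atoms of every block occurring in it are
atoms not in `Ab`. -/
inductive Block.WF (Ab : Set α) : Block α → Prop where
  | mk {C : Set α} {fs : List (PForm α)} {bs : List (Block α)} :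
      C ⊆ Abᶜ → (∀ b ∈ bs, b.WF Ab) → Block.WF Ab (.mk C fs bs)

theorem lePZ_iff {β : Type u} (P Z M M' : Set β) : lePZ P Z M M' ↔
    (∀ x, x ∈ P → x ∈ M → x ∈ M') ∧ ∀ x, x ∉ P → x ∉ Z → (x ∈ M ↔ x ∈ M') := by
  unfold lePZ
  simp only [Set.subset_def, Set.ext_iff, Set.mem_inter_iff, Set.mem_compl_iff, Set.mem_union]
  constructor
  · rintro ⟨h1, h2⟩
    refine ⟨fun x hx hm => (h1 x ⟨hm, hx⟩).1, fun x hp hz => ?_⟩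
    have := h2 x
    tauto
  · rintro ⟨h1, h2⟩
    refine ⟨fun x hx => ⟨h1 x hx.2 hx.1, hx.2⟩, fun x => ?_⟩
    have := h2 x
    tauto

theorem agree_iff {β : Type u} (P M M' : Set β) : M ∩ Pᶜ = M' ∩ Pᶜ ↔
    ∀ x, x ∉ P → (x ∈ M ↔ x ∈ M') := by
  simp only [Set.ext_iff, Set.mem_inter_iff, Set.mem_compl_iff]
  exact forall_congr' fun x => by tauto

theorem sat_map_inl (f : PForm α) (N : Set (ExtA α)) :
    (f.map Sum.inl).sat N ↔ f.sat (Sum.inl ⁻¹' N) := by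
  induction f <;> simp_all [PForm.map, PForm.sat]

theorem inl_mem_extAb (Ab : Set α) (q : α) : (Sum.inl q : ExtA α) ∈ extAb Ab ↔ q ∈ Ab := by
  simp [extAb]

theorem inr_mem_extAb (Ab : Set α) (b : Bool) (q : α) :
    (Sum.inr (b, q) : ExtA α) ∈ extAb Ab ↔ q ∉ Ab := by
  simp [extAb]

theorem mem_listOf (S : Set α) (q : α) : q ∈ listOf S ↔ q ∈ S := by
  simp [listOf]

/-- The members of the transformed block hold. -/
theorem members_iff (Ab C : Set α) (fs : List (PForm α)) (bs : List (Block α))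
    (ih : ∀ b ∈ bs, ∀ N : Set (ExtA α),
      Block.sat (extAb Ab) (Block.elimFixed Ab b) N ↔ Block.sat Ab b (Sum.inl ⁻¹' N))
    (N : Set (ExtA α)) :
    ((∀ f ∈ (((listOf ((C ∪ Ab)ᶜ)).map fun q =>
            PForm.conj
              (PForm.iffF (.atom (Sum.inl q)) (.atom (Sum.inr (false, q))))
              (PForm.iffF (.atom (Sum.inr (false, q))) (.neg (.atom (Sum.inr (true, q)))))) ++
          fs.map (PForm.map Sum.inl)), f.sat N) ∧
      ∀ b ∈ (bs.attach.map fun b => Block.elimFixed Ab b.1), Block.sat (extAb Ab) b N) ↔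
    (∀ q, q ∉ C → q ∉ Ab → ((Sum.inr (false, q) ∈ N ↔ Sum.inl q ∈ N) ∧
        (Sum.inr (true, q) ∈ N ↔ Sum.inl q ∉ N))) ∧
      ((∀ f ∈ fs, f.sat (Sum.inl ⁻¹' N)) ∧ ∀ b ∈ bs, Block.sat Ab b (Sum.inl ⁻¹' N)) := by
  have e1 : (∀ b ∈ (bs.attach.map fun b => Block.elimFixed Ab b.1),
      Block.sat (extAb Ab) b N) ↔ ∀ b ∈ bs, Block.sat Ab b (Sum.inl ⁻¹' N) := by
    constructor
    · intro h b hb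
      exact (ih b hb N).1 (h _ (List.mem_map.2 ⟨⟨b, hb⟩, List.mem_attach _ _, rfl⟩))
    · intro h b hb
      obtain ⟨⟨c, hc⟩, -, rfl⟩ := List.mem_map.1 hb
      exact (ih c hc N).2 (h c hc)
  rw [e1, ← and_assoc]
  refine and_congr ?_ Iff.rfl
  rw [List.forall_mem_append, List.forall_mem_map, List.forall_mem_map]
  refine and_congr ?_ ?_
  · refine forall_congr' fun q => ?_
    rw [mem_listOf]
    simp only [Set.mem_compl_iff, Set.mem_union, PForm.sat, PForm.iffF, PForm.imp]
    tauto
  · refine forall_congr' fun f => ?_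
    rw [sat_map_inl]

theorem elim_block (Ab : Set α) (B : Block α) (hB : B.WF Ab) :
    ∀ N : Set (ExtA α),
      Block.sat (extAb Ab) (Block.elimFixed Ab B) N ↔ Block.sat Ab B (Sum.inl ⁻¹' N) := by
  induction hB with
  | @mk C fs bs hC _ ih =>
  intro N
  rw [Block.elimFixed, Block.sat, Block.sat]
  simp only [members_iff Ab C fs bs ih, agree_iff, ltPZ, lePZ_iff]
  have hZ : ∀ q : α, (Sum.inl q : ExtA α) ∈ Sum.inl '' Abᶜ ↔ q ∉ Ab := by simp
  have hZ' : ∀ p : Bool × α, (Sum.inr p : ExtA α) ∉ Sum.inl '' Abᶜ := by simp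
  constructor
  · rintro ⟨Ns, h1, ⟨hF, hS⟩, hmin⟩
    refine ⟨Sum.inl ⁻¹' Ns, fun x hx => h1 _ (by rwa [inl_mem_extAb]), hS, ?_⟩
    rintro K hK ⟨⟨k1, k2⟩, k3⟩
    let K' : Set (ExtA α) := {x | Sum.elim (fun q => q ∈ K) (fun p => Sum.inr p ∈ Ns) x}
    have hKK : Sum.inl ⁻¹' K' = K := rfl
    have kl : ∀ q, (Sum.inl q : ExtA α) ∈ K' ↔ q ∈ K := fun _ => Iff.rfl
    have kr : ∀ p, (Sum.inr p : ExtA α) ∈ K' ↔ Sum.inr p ∈ Ns := fun _ => Iff.rfl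
    refine hmin K' ⟨?_, by rw [hKK]; exact hK⟩ ⟨⟨?_, ?_⟩, ?_⟩
    · intro q hc ha
      have a := hF q hc ha
      have b := k2 q ha hc
      rw [Set.mem_preimage] at b
      rw [kl, kr, kr, b]
      exact a
    · rintro (q | p) hx hk
      · exact k1 q ((inl_mem_extAb _ _).1 hx) hk
      · exact hk
    · rintro (q | p) hx hz
      · rw [inl_mem_extAb] at hx
        rw [hZ] at hz
        exact absurd hx hz
      · exact Iff.rfl
    · rintro ⟨l1, -⟩
      exact k3 ⟨fun x hx hm => l1 (Sum.inl x) ((inl_mem_extAb _ _).2 hx) hm,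
        fun x hx hc => (k2 x hx hc).symm⟩
  · rintro ⟨Ms, h1, hS, hmin⟩
    let Ns : Set (ExtA α) := {x | Sum.elim (fun q => q ∈ Ms) (fun p =>
      (p.2 ∈ Ab ∧ Sum.inr p ∈ N) ∨
      (p.2 ∉ Ab ∧ p.2 ∉ C ∧ ((p.1 = false ∧ p.2 ∈ Ms) ∨ (p.1 = true ∧ p.2 ∉ Ms)))) x}
    have hNN : Sum.inl ⁻¹' Ns = Ms := rfl
    have nl : ∀ q, (Sum.inl q : ExtA α) ∈ Ns ↔ q ∈ Ms := fun _ => Iff.rfl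
    have nr : ∀ b q, (Sum.inr (b, q) : ExtA α) ∈ Ns ↔ ((q ∈ Ab ∧ Sum.inr (b, q) ∈ N) ∨
      (q ∉ Ab ∧ q ∉ C ∧ ((b = false ∧ q ∈ Ms) ∨ (b = true ∧ q ∉ Ms)))) :=
      fun _ _ => Iff.rfl
    refine ⟨Ns, ?_, ⟨?_, by rw [hNN]; exact hS⟩, ?_⟩
    · rintro (q | ⟨b, q⟩) hx
      · exact h1 q (by rwa [inl_mem_extAb] at hx)
      · rw [inr_mem_extAb] at hx
        rw [nr]
        tauto
    · intro q hc ha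
      rw [nr, nr, nl]
      simp [hc, ha]
    · rintro K' ⟨hF, hK⟩ ⟨⟨k1, k2⟩, k3⟩
      have key : ∀ q, q ∉ Ab → q ∉ C → ((Sum.inl q : ExtA α) ∈ K' ↔ q ∈ Ms) := by
        intro q ha hc
        obtain ⟨f1, f2⟩ := hF q hc ha
        have a := k1 (Sum.inr (false, q)) ((inr_mem_extAb _ _ _).2 ha)
        have b := k1 (Sum.inr (true, q)) ((inr_mem_extAb _ _ _).2 ha)
        rw [nr, f1] at a
        rw [nr, f2] at b
        simp only [ha, hc] at a b
        simp at a b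
        tauto
      refine hmin (Sum.inl ⁻¹' K') hK ⟨⟨?_, key⟩, ?_⟩
      · intro x hx hk
        exact k1 (Sum.inl x) ((inl_mem_extAb _ _).2 hx) hk
      · rintro ⟨l1, -⟩
        refine k3 ⟨?_, fun x hx hz => (k2 x hx hz).symm⟩
        rintro (q | ⟨b, q⟩) hx hm
        · exact l1 q ((inl_mem_extAb _ _).1 hx) hm
        · rw [inr_mem_extAb] at hx
          rw [nr] at hm
          rcases hm with hm | ⟨-, hc, hm⟩
          · exact absurd hm.1 hx
          · obtain ⟨f1, f2⟩ := hF q hc hx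
            have := key q hx hc
            rcases hm with ⟨rfl, hm⟩ | ⟨rfl, hm⟩
            · rw [f1, this]; exact hm
            · rw [f2, this]; exact hm

/-- Let `T'` be obtained from the NAT `T` by, for each fixed letter
`q`, introducing two fresh abnormality letters `ab_q` and `ab'_q` into `Ab`, adding
the formula `(q ↔ ab_q) ∧ (ab_q ↔ ¬ab'_q)` as a new member in each block of `T` in
which `q` is fixed, and declaring `q` described in every block.  Then, modulo the
auxiliary abnormality letters, `T` and `T'` are logically equivalent: they have the
same sets of models on the original alphabet. -/
theorem nat_elim_fixed_letters (Ab : Set α) (T : NAT α) (hWF : ∀ B ∈ T, B.WF Ab) :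
    (∀ M : Set α,
        NAT.sat Ab T M ↔
          ∃ N : Set (ExtA α), Sum.inl ⁻¹' N = M ∧
            NAT.sat (extAb Ab) (T.map (Block.elimFixed Ab)) N) ∧
    (∀ N : Set (ExtA α),
        NAT.sat (extAb Ab) (T.map (Block.elimFixed Ab)) N →
          NAT.sat Ab T (Sum.inl ⁻¹' N)) := by
  have key : ∀ N : Set (ExtA α), NAT.sat (extAb Ab) (T.map (Block.elimFixed Ab)) N ↔
      NAT.sat Ab T (Sum.inl ⁻¹' N) := by
    intro N
    unfold NAT.sat
    rw [List.forall_mem_map]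
    exact forall_congr' fun B => forall_congr' fun hB => elim_block Ab B (hWF B hB) N
  refine ⟨fun M => ⟨fun h => ?_, ?_⟩, fun N => (key N).1⟩
  · have e : (Sum.inl ⁻¹' (Sum.inl '' M : Set (ExtA α))) = M :=
      Set.preimage_image_eq _ Sum.inl_injective
    exact ⟨Sum.inl '' M, e, (key _).2 (by rw [e]; exact h)⟩
  · rintro ⟨N, rfl, h⟩
    exact (key N).1 h

end NestedCirc
end

section
/- Prioritized circumscription is expressed by nested circumscription: let φ be a propositional formula, P1,…,Pn and Z pairwise disjoint sets of atoms, and define ψ1 = CIRC(φ; P1; Z∪P2∪⋯∪Pn) and ψ_i = CIRC(ψ_{i-1}; P_i; Z∪P_{i+1}∪⋯∪P_n) for i = 2,…,n. Then an interpretation M is a model of ψ_n if and only if M is a model of φ that is minimal with respect to the prioritized preference relation ≤_{P1,…,Pn;Z}, i.e., no model M' of φ satisfies M' <_{P1,…,Pn;Z} M. -/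
/-!
STATEMENT 16: prioritized circumscription is expressed by nested circumscription:
the models of `ψₙ` are exactly the models of `φ` minimal w.r.t. the prioritized
preference relation `≤_{P1,…,Pn;Z}`.
-/

namespace NestedCirc

universe u
variable {α : Type u}

/-- The models of the circumscription of a class `S` of models (the models of some
formula) minimizing `P` with `Z` floating: the `(P;Z)`-minimal elements of `S`. -/
def circMods (S : Set (Set α)) (P Z : Set α) : Set (Set α) :=
  {M ∈ S | ∀ N ∈ S, ¬ ltPZ P Z N M}

/-- The atoms floating at stage `i`: `Z ∪ P_{i+1} ∪ ⋯ ∪ P_n`. -/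
def floatAfter (P : ℕ → Set α) (Z : Set α) (n i : ℕ) : Set α :=
  Z ∪ ⋃ j ∈ Set.Ioc i n, P j

/-- The models of `ψᵢ`, where `ψ₁ = CIRC(φ; P₁; Z∪P₂∪⋯∪Pₙ)` and
`ψᵢ = CIRC(ψ_{i-1}; Pᵢ; Z∪P_{i+1}∪⋯∪Pₙ)` for `i = 2,…,n`. -/
def nestedPrioMods (φ : PForm α) (P : ℕ → Set α) (Z : Set α) (n : ℕ) :
    ℕ → Set (Set α)
  | 0 => {M | φ.sat M}
  | i + 1 => circMods (nestedPrioMods φ P Z n i) (P (i + 1)) (floatAfter P Z n (i + 1))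

/-- The prioritized preference relation `M ≤_{P1,…,Pn;Z} M'`: `M` and `M'` agree on the
fixed letters and, lexicographically, either `M` and `M'` coincide on all `Pᵢ` or `M`
is strictly smaller than `M'` on the first `Pᵢ` on which they differ. -/
def lePrio (P : ℕ → Set α) (Z : Set α) (n : ℕ) (M M' : Set α) : Prop :=
  M ∩ (Z ∪ ⋃ j ∈ Set.Icc 1 n, P j)ᶜ = M' ∩ (Z ∪ ⋃ j ∈ Set.Icc 1 n, P j)ᶜ ∧
  ∀ i ∈ Set.Icc 1 n,
    (∀ j ∈ Set.Icc 1 n, j < i → M ∩ P j = M' ∩ P j) → M ∩ P i ⊆ M' ∩ P i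

/-- `M <_{P1,…,Pn;Z} M'` (strict prioritized preference). -/
def ltPrio (P : ℕ → Set α) (Z : Set α) (n : ℕ) (M M' : Set α) : Prop :=
  lePrio P Z n M M' ∧ ¬ lePrio P Z n M' M

theorem agree_iff_s16 (P : ℕ → Set α) (Z : Set α) (n : ℕ)
    (hPZ : ∀ i ∈ Set.Icc 1 n, Disjoint (P i) Z)
    (hPP : ∀ i ∈ Set.Icc 1 n, ∀ j ∈ Set.Icc 1 n, i ≠ j → Disjoint (P i) (P j))
    (i : ℕ) (hi : i ∈ Set.Icc 1 n) (N M : Set α) :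
    N ∩ (P i ∪ floatAfter P Z n i)ᶜ = M ∩ (P i ∪ floatAfter P Z n i)ᶜ ↔
      (N ∩ (Z ∪ ⋃ j ∈ Set.Icc 1 n, P j)ᶜ = M ∩ (Z ∪ ⋃ j ∈ Set.Icc 1 n, P j)ᶜ ∧
        ∀ j ∈ Set.Icc 1 n, j < i → N ∩ P j = M ∩ P j) := by
  have hF : ∀ x, x ∈ (P i ∪ floatAfter P Z n i)ᶜ ↔
      (x ∉ Z ∧ ∀ j ∈ Set.Icc 1 n, i ≤ j → x ∉ P j) := by
    intro x
    simp only [floatAfter, Set.mem_compl_iff, Set.mem_union, Set.mem_iUnion, Set.mem_Icc,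
      Set.mem_Ioc] at hi ⊢
    constructor
    · intro h
      refine ⟨fun hz => h (Or.inr (Or.inl hz)), fun j hj hij hx => ?_⟩
      rcases eq_or_lt_of_le hij with rfl | hlt
      · exact h (Or.inl hx)
      · exact h (Or.inr (Or.inr ⟨j, ⟨hlt, hj.2⟩, hx⟩))
    · rintro ⟨hz, h⟩ (hx | hx | ⟨j, hj, hx⟩)
      · exact h i hi le_rfl hx
      · exact hz hx
      · exact h j ⟨by omega, hj.2⟩ hj.1.le hx
  have hQ : ∀ x, x ∈ (Z ∪ ⋃ j ∈ Set.Icc 1 n, P j)ᶜ ↔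
      (x ∉ Z ∧ ∀ j ∈ Set.Icc 1 n, x ∉ P j) := by
    intro x
    simp
  have key : ∀ A : Set α, N ∩ A = M ∩ A ↔ ∀ x ∈ A, (x ∈ N ↔ x ∈ M) := by
    intro A
    simp only [Set.ext_iff, Set.mem_inter_iff]
    exact forall_congr' fun x => by tauto
  simp only [key, hF, hQ]
  constructor
  · intro h
    refine ⟨fun x hx => h x ⟨hx.1, fun j hj _ => hx.2 j hj⟩, fun j hj hji x hx => h x ⟨?_, ?_⟩⟩
    · exact fun hz => Set.disjoint_left.1 (hPZ j hj) hx hz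
    · intro k hk hik hxk
      exact Set.disjoint_left.1 (hPP j hj k hk (by omega)) hx hxk
  · rintro ⟨h1, h2⟩ x ⟨hz, hx⟩
    by_cases h : ∃ j ∈ Set.Icc 1 n, x ∈ P j
    · obtain ⟨j, hj, hxj⟩ := h
      by_cases hij : i ≤ j
      · exact absurd hxj (hx j hj hij)
      · exact h2 j hj (by omega) x hxj
    · push Not at h
      exact h1 x ⟨hz, h⟩

theorem ltPZ_iff (P : ℕ → Set α) (Z : Set α) (n : ℕ)
    (hPZ : ∀ i ∈ Set.Icc 1 n, Disjoint (P i) Z)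
    (hPP : ∀ i ∈ Set.Icc 1 n, ∀ j ∈ Set.Icc 1 n, i ≠ j → Disjoint (P i) (P j))
    (i : ℕ) (hi : i ∈ Set.Icc 1 n) (N M : Set α) :
    ltPZ (P i) (floatAfter P Z n i) N M ↔
      ((N ∩ (Z ∪ ⋃ j ∈ Set.Icc 1 n, P j)ᶜ = M ∩ (Z ∪ ⋃ j ∈ Set.Icc 1 n, P j)ᶜ ∧
        ∀ j ∈ Set.Icc 1 n, j < i → N ∩ P j = M ∩ P j) ∧
        N ∩ P i ⊆ M ∩ P i ∧ ¬ M ∩ P i ⊆ N ∩ P i) := by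
  rw [← agree_iff_s16 P Z n hPZ hPP i hi]
  unfold ltPZ lePZ
  constructor
  · rintro ⟨⟨h1, h2⟩, h3⟩
    exact ⟨h2, h1, fun h => h3 ⟨h, h2.symm⟩⟩
  · rintro ⟨h2, h1, h3⟩
    exact ⟨⟨h1, h2⟩, fun h => h3 h.1⟩

theorem nested_anti (φ : PForm α) (P : ℕ → Set α) (Z : Set α) (n : ℕ) (M : Set α)
    {i j : ℕ} (h : i ≤ j) (hM : M ∈ nestedPrioMods φ P Z n j) :
    M ∈ nestedPrioMods φ P Z n i := by
  induction j, h using Nat.le_induction with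
  | base => exact hM
  | succ k _ ih => exact ih hM.1

/-- Let `φ` be propositional, `P₁,…,Pₙ` and `Z` pairwise disjoint
sets of atoms, and let `ψ₁ = CIRC(φ; P₁; Z∪P₂∪⋯∪Pₙ)` and
`ψᵢ = CIRC(ψ_{i-1}; Pᵢ; Z∪P_{i+1}∪⋯∪Pₙ)` (`i = 2,…,n`).  Then `M` is a model of `ψₙ`
iff `M` is a model of `φ` that is minimal w.r.t. the prioritized preference relation
`≤_{P1,…,Pn;Z}`, i.e., no model `M'` of `φ` satisfies `M' <_{P1,…,Pn;Z} M`. -/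
theorem prioritized_circumscription_as_nested (φ : PForm α) (P : ℕ → Set α)
    (Z : Set α) (n : ℕ)
    (hPZ : ∀ i ∈ Set.Icc 1 n, Disjoint (P i) Z)
    (hPP : ∀ i ∈ Set.Icc 1 n, ∀ j ∈ Set.Icc 1 n, i ≠ j → Disjoint (P i) (P j)) :
    ∀ M : Set α,
      M ∈ nestedPrioMods φ P Z n n ↔
        (φ.sat M ∧ ∀ M' : Set α, φ.sat M' → ¬ ltPrio P Z n M' M) := by
  intro M
  constructor
  · intro hM
    refine ⟨nested_anti φ P Z n M (Nat.zero_le n) hM, ?_⟩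
    rintro M' hM' ⟨⟨hQ, hle⟩, hnle⟩
    have : ∃ i ∈ Set.Icc 1 n, (∀ j ∈ Set.Icc 1 n, j < i → M ∩ P j = M' ∩ P j) ∧
        ¬ M ∩ P i ⊆ M' ∩ P i := by
      by_contra hcon
      push Not at hcon
      exact hnle ⟨hQ.symm, hcon⟩
    obtain ⟨i, hi, hag, hns⟩ := this
    have hsub := hle i hi (fun j hj hji => (hag j hj hji).symm)
    have hmem : ∀ k, k < i → M' ∈ nestedPrioMods φ P Z n k := by
      intro k
      induction k with
      | zero => exact fun _ => hM'
      | succ k ih =>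
        intro hk
        refine ⟨ih (by omega), fun N hN hlt => ?_⟩
        have hk1 : k + 1 ∈ Set.Icc 1 n := ⟨by omega, by have := hi.2; omega⟩
        have hMk : M ∈ nestedPrioMods φ P Z n (k + 1) :=
          nested_anti φ P Z n M hk1.2 hM
        refine hMk.2 N hN ?_
        rw [ltPZ_iff P Z n hPZ hPP _ hk1] at hlt ⊢
        obtain ⟨⟨h1, h2⟩, h3, h4⟩ := hlt
        rw [hag (k + 1) hk1 hk]
        exact ⟨⟨h1.trans hQ, fun j hj hjk =>
          (h2 j hj hjk).trans (hag j hj (by omega)).symm⟩, h3, h4⟩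
    obtain ⟨i, rfl⟩ : ∃ k, i = k + 1 := ⟨i - 1, by have := hi.1; omega⟩
    have hMi : M ∈ nestedPrioMods φ P Z n (i + 1) := nested_anti φ P Z n M hi.2 hM
    refine hMi.2 M' (hmem i (by omega)) ?_
    rw [ltPZ_iff P Z n hPZ hPP _ hi]
    exact ⟨⟨hQ, fun j hj hji => (hag j hj hji).symm⟩, hsub, hns⟩
  · rintro ⟨hM, hmin⟩
    have : ∀ k, k ≤ n → M ∈ nestedPrioMods φ P Z n k := by
      intro k
      induction k with
      | zero => exact fun _ => hM
      | succ k ih =>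
        intro hk
        refine ⟨ih (by omega), fun N hN hlt => ?_⟩
        have hk1 : k + 1 ∈ Set.Icc 1 n := ⟨by omega, hk⟩
        rw [ltPZ_iff P Z n hPZ hPP _ hk1] at hlt
        obtain ⟨⟨h1, h2⟩, h3, h4⟩ := hlt
        refine hmin N (nested_anti φ P Z n N (Nat.zero_le k) hN) ⟨⟨h1, ?_⟩, ?_⟩
        · intro i hi hag
          rcases lt_trichotomy i (k + 1) with h | h | h
          · exact (h2 i hi h).subset
          · rw [h]; exact h3
          · exact absurd (hag _ hk1 h).symm.subset h4
        · intro hle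
          exact h4 (hle.2 _ hk1 fun j hj hjk => (h2 j hj hjk).symm)
    exact this n le_rfl

end NestedCirc
end
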